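/- arXiv:1507.01308 — 3 statements merged into one kernel-verified Lean document; each statement's English description precedes it below -/
import Mathlib

section
/- Let n, m1, m2 be positive integers with n > m1 + m2. Fix x0 ∈ ℂ^{m1} with x0 ≠ 0 and y0 ∈ ℂ^{m2} with y0 ≠ 0. Then for Lebesgue-almost all pairs (D, E) ∈ ℂ^{n×m1} × ℂ^{n×m2}, every pair (x, y) ∈ ℂ^{m1} × ℂ^{m2} satisfying (D x) ⊛ (E y) = (D x0) ⊛ (E y0) satisfies x = σ x0 and y = σ⁻¹ y0 for some nonzero σ ∈ ℂ. (Weak identifiability of blind deconvolution with subspace constraints.) -/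
/-!
The discrete Fourier transform turns circular convolution into the pointwise product and acts on
the matrices `(D, E)` by an invertible linear map, which preserves null sets. So it suffices to show
that, for almost all `(A, B)`, the system `(A x)_k (B y)_k = (A x₀)_k (B y₀)_k` (all `k`) determines
`(x, y)` up to scaling.

The `k`-th equation says that the `k`-th row of `A` is orthogonal to
`v_k = (B y)_k x - (B y₀)_k x₀`. If all the `v_k` are nonzero, each equation can be solved for one
entry of `A`, so `(A, B)` is determined by `B`, by the remaining entries of `A`, and by the
`m₁ + m₂ < n` coordinates of `(x, y)`: fewer parameters than there are entries. Such a set of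
matrices is null by the easy case of Sard's theorem. This dimension count is
`measure_exists_param_eq_zero`; there the parameters are stored in the `n` freed entries of `A`,
so that the parametrization becomes a map of the matrix space to itself which ignores at least one
coordinate, and hence has everywhere vanishing Jacobian.

If instead some `v_k = 0`, then, as generically `(B y₀)_k ≠ 0`, `x = c x₀` with `c ≠ 0`. As
generically `(A x₀)_k ≠ 0` for every `k`, the equations become `B (c y - y₀) = 0`, and `B` is
generically injective (the same dimension count once more), so `y = c⁻¹ y₀`.
-/

open MeasureTheory Filter

/-- Circular convolution of two vectors in `ℂ^n` indexed by `ZMod n`. -/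
noncomputable def cconv {n : ℕ} [NeZero n] (u v : ZMod n → ℂ) : ZMod n → ℂ :=
  fun k => ∑ j : ZMod n, u j * v (k - j)

/-- Matrix-vector multiplication `D x` for `D ∈ ℂ^{n×m}`. -/
noncomputable def mApply {n m : ℕ} [NeZero n] (D : ZMod n → Fin m → ℂ) (x : Fin m → ℂ) :
    ZMod n → ℂ :=
  fun k => ∑ i, D k i * x i

instance isAddHaarMeasure_volume_matrix {K ι : Type*} [Fintype K] [Fintype ι] :
    (volume : Measure (K → ι → ℂ)).IsAddHaarMeasure :=
  have : (volume : Measure (ι → ℂ)).IsAddHaarMeasure := Measure.pi.isAddHaarMeasure _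
  Measure.pi.isAddHaarMeasure _

instance isAddHaarMeasure_volume_matrix_prod {K ι κ : Type*} [Fintype K] [Fintype ι]
    [Fintype κ] : (volume : Measure ((K → ι → ℂ) × (K → κ → ℂ))).IsAddHaarMeasure :=
  Measure.prod.instIsAddHaarMeasure _ _

/-- The easy case of Sard's theorem for a map that does not depend on the direction `d`. -/
lemma measure_image_eq_zero_of_invariant {E : Type*} [NormedAddCommGroup E] [NormedSpace ℝ E]
    [FiniteDimensional ℝ E] [MeasurableSpace E] [BorelSpace E] (μ : Measure E)
    [μ.IsAddHaarMeasure] (F : E → E) (s : Set E) (hF : ∀ q ∈ s, DifferentiableAt ℝ F q)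
    (d : E) (hd : d ≠ 0) (hinv : ∀ q, ∀ t : ℝ, F (q + t • d) = F q) : μ (F '' s) = 0 := by
  refine addHaar_image_eq_zero_of_det_fderivWithin_eq_zero μ (f' := fun q => fderiv ℝ F q)
    (fun q hq => (hF q hq).hasFDerivAt.hasFDerivWithinAt) ?_
  intro q hq
  have hker : fderiv ℝ F q d = 0 := by
    rw [← (hF q hq).lineDeriv_eq_fderiv]
    simp [lineDeriv, hinv]
  by_contra hdet
  exact hd ((LinearMap.equivOfDetNeZero (fderiv ℝ F q : E →ₗ[ℝ] E) hdet).injective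
    (by simpa using hker))

/-- Dimension count: if each row of `A` is required to be orthogonal to a nonzero vector `v k B p`
depending differentiably on `B` and on a parameter `p` with fewer coordinates than `A` has rows,
then the pairs `(A, B)` for which a suitable `p` exists form a null set. -/
lemma measure_exists_param_eq_zero {K ι κ P : Type*} [Fintype K] [Fintype ι] [Fintype κ]
    [Fintype P] (μ : Measure ((K → ι → ℂ) × (K → κ → ℂ))) [μ.IsAddHaarMeasure]
    (hP : Fintype.card P < Fintype.card K)
    (v : K → (K → κ → ℂ) → (P → ℂ) → ι → ℂ)
    (hv : ∀ k i, Differentiable ℝ (fun q : (K → κ → ℂ) × (P → ℂ) => v k q.1 q.2 i)) :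
    μ {q | ∃ p, ∀ k, v k q.2 p ≠ 0 ∧ ∑ i, q.1 k i * v k q.2 p i = 0} = 0 := by
  classical
  obtain ⟨e⟩ : Nonempty (P ↪ K) := Function.Embedding.nonempty_of_card_le hP.le
  obtain ⟨k₀, hk₀⟩ : ∃ k₀, ∀ a, e a ≠ k₀ := by
    by_contra! h
    exact absurd (Fintype.card_le_of_surjective e h) (not_le.2 hP)
  -- `J k` is the column of the entry of row `k` that is solved for; the parameter `p` is read off
  -- from the entries `(e a, J (e a))`, and the entry `(k₀, J k₀)` is not used at all.
  let prm : (K → ι) → (K → ι → ℂ) → P → ℂ := fun J A a => A (e a) (J (e a))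
  let F : (K → ι) → (K → ι → ℂ) × (K → κ → ℂ) → (K → ι → ℂ) × (K → κ → ℂ) := fun J q =>
    (fun k j => if j = J k then
        -(∑ i ∈ Finset.univ.erase (J k), q.1 k i * v k q.2 (prm J q.1) i)
          / v k q.2 (prm J q.1) (J k)
      else q.1 k j, q.2)
  let s : (K → ι) → Set ((K → ι → ℂ) × (K → κ → ℂ)) := fun J =>
    {q | ∀ k, v k q.2 (prm J q.1) (J k) ≠ 0}
  have hnull : ∀ J, μ (F J '' s J) = 0 := by
    intro J
    refine measure_image_eq_zero_of_invariant μ (F J) (s J) ?_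
      (Pi.single k₀ (Pi.single (J k₀) 1), 0) ?_ ?_
    · intro q hq
      have hvd : ∀ k i, Differentiable ℝ
          (fun q : (K → ι → ℂ) × (K → κ → ℂ) => v k q.2 (prm J q.1) i) := by
        intro k i
        have hpair : Differentiable ℝ
            (fun q : (K → ι → ℂ) × (K → κ → ℂ) => (q.2, prm J q.1)) := by
          simp only [prm]
          fun_prop
        exact (hv k i).comp hpair
      refine DifferentiableAt.prodMk ?_ differentiableAt_snd
      refine differentiableAt_pi.2 fun k => differentiableAt_pi.2 fun j => ?_
      by_cases hj : j = J k
      · simp only [hj, if_true]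
        have hnum : DifferentiableAt ℝ (fun q : (K → ι → ℂ) × (K → κ → ℂ) =>
            -(∑ i ∈ Finset.univ.erase (J k), q.1 k i * v k q.2 (prm J q.1) i)) q :=
          DifferentiableAt.fun_neg (DifferentiableAt.fun_sum fun i _ =>
            DifferentiableAt.fun_mul (by fun_prop) (hvd k i q))
        simp only [div_eq_mul_inv]
        exact DifferentiableAt.fun_mul hnum (DifferentiableAt.fun_inv (hvd k (J k) q) (hq k))
      · simp only [hj, if_false]
        fun_prop
    · intro h
      have := congrFun (congrFun (congrArg Prod.fst h) k₀) (J k₀)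
      simp at this
    · rintro ⟨A, B⟩ t
      set A' : K → ι → ℂ :=
        A + t • (Pi.single k₀ (Pi.single (J k₀) 1) : K → ι → ℂ) with hA'
      have hne : ∀ k j, (k = k₀ → j ≠ J k) → A' k j = A k j := by
        intro k j hkj
        by_cases hk : k = k₀
        · subst hk
          simp [hA', hkj rfl]
        · simp [hA', hk]
      have hprm : prm J A' = prm J A := by
        funext a
        exact hne _ _ fun h => absurd h (hk₀ a)
      have hpt : (A, B) + t • ((Pi.single k₀ (Pi.single (J k₀) 1), 0) :
          (K → ι → ℂ) × (K → κ → ℂ)) = (A', B) := by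
        ext <;> simp [hA']
      rw [hpt]
      simp only [F, hprm]
      refine Prod.ext ?_ rfl
      funext k j
      dsimp only
      by_cases hj : j = J k
      · simp only [hj, if_true]
        congr 2
        exact Finset.sum_congr rfl fun i hi => by rw [hne k i fun _ => Finset.ne_of_mem_erase hi]
      · simp only [hj, if_false]
        exact hne k j fun _ => hj
  refine measure_mono_null ?_ (measure_iUnion_null hnull)
  rintro ⟨A, B⟩ ⟨p, hp⟩
  have hJ : ∀ k, ∃ i, v k B p i ≠ 0 := fun k => Function.ne_iff.1 (hp k).1
  choose J hJ using hJ
  -- The preimage of `(A, B)` under `F J`: overwrite the entries `(e a, J (e a))` of `A` by `p a`.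
  let A' : K → ι → ℂ := fun k j =>
    if j = J k then (if h : ∃ a, e a = k then p h.choose else 0) else A k j
  have hprm : prm J A' = p := by
    funext a
    have hex : ∃ b, e b = e a := ⟨a, rfl⟩
    simp only [prm, A', if_true, dif_pos hex]
    exact congrArg p (e.injective hex.choose_spec)
  refine Set.mem_iUnion.2 ⟨J, (A', B), ?_, ?_⟩
  · intro k
    simpa only [hprm] using hJ k
  · simp only [F, hprm]
    refine Prod.ext ?_ rfl
    funext k j
    dsimp only
    by_cases hj : j = J k
    · subst hj
      have hsum := (hp k).2
      rw [← Finset.add_sum_erase _ _ (Finset.mem_univ (J k))] at hsum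
      have hA : ∑ i ∈ Finset.univ.erase (J k), A' k i * v k B p i
          = ∑ i ∈ Finset.univ.erase (J k), A k i * v k B p i :=
        Finset.sum_congr rfl fun i hi => by simp [A', Finset.ne_of_mem_erase hi]
      rw [if_pos rfl, hA, div_eq_iff (hJ k)]
      exact neg_eq_of_add_eq_zero_left hsum
    · simp [A', hj]

/-- A generic matrix sends a fixed nonzero vector to a vector without zero entries. -/
lemma ae_mApply_ne_zero {n m : ℕ} [NeZero n] (x : Fin m → ℂ) (hx : x ≠ 0) :
    ∀ᵐ A : ZMod n → Fin m → ℂ, ∀ k, mApply A x k ≠ 0 := by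
  refine ae_all_iff.2 fun k => ?_
  let L : (ZMod n → Fin m → ℂ) →ₗ[ℝ] ℂ :=
    { toFun := fun A => mApply A x k
      map_add' := fun A A' => by simp [mApply, add_mul, Finset.sum_add_distrib]
      map_smul' := fun c A => by simp [mApply, Finset.mul_sum, mul_assoc] }
  have hker : L.ker ≠ ⊤ := by
    intro h
    obtain ⟨i, hi⟩ := Function.ne_iff.1 hx
    have h1 : L (Pi.single k (Pi.single i 1)) = 0 := by
      rw [LinearMap.ker_eq_top.1 h]; rfl
    apply hi
    simpa [L, mApply, Pi.single_apply] using h1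
  have h0 := Measure.addHaar_submodule (volume : Measure (ZMod n → Fin m → ℂ)) L.ker hker
  rw [ae_iff]
  refine measure_mono_null (fun A hA => ?_) h0
  exact not_not.1 hA

/-- A generic matrix with more rows than columns is injective. The first factor is a dummy. -/
lemma ae_injective {n m1 m2 : ℕ} [NeZero n] (hn : m2 < n) :
    ∀ᵐ q : (ZMod n → Fin m1 → ℂ) × (ZMod n → Fin m2 → ℂ),
      ∀ w : Fin m2 → ℂ, mApply q.2 w = 0 → w = 0 := by
  have h := measure_exists_param_eq_zero
    (volume : Measure ((ZMod n → Fin m2 → ℂ) × (ZMod n → Fin m1 → ℂ)))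
    (P := Fin m2) (by simpa using hn) (fun _ _ p => p) (fun k i => by fun_prop)
  have hswap : ∀ᵐ q : (ZMod n → Fin m2 → ℂ) × (ZMod n → Fin m1 → ℂ),
      ∀ w : Fin m2 → ℂ, mApply q.1 w = 0 → w = 0 := by
    rw [ae_iff]
    refine measure_mono_null (fun q hq => ?_) h
    simp only [Set.mem_ofPred_eq, not_forall] at hq
    obtain ⟨w, hw, hw0⟩ := hq
    exact ⟨w, fun k => ⟨hw0, congrFun hw k⟩⟩
  exact (Measure.measurePreserving_swap
    (μ := (volume : Measure (ZMod n → Fin m1 → ℂ)))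
    (ν := (volume : Measure (ZMod n → Fin m2 → ℂ)))).quasiMeasurePreserving.ae hswap

/-- Weak identifiability for the pointwise product in place of the convolution. -/
lemma ae_identifiable_mul (n m1 m2 : ℕ) [NeZero n] (hn : m1 + m2 < n)
    (x0 : Fin m1 → ℂ) (hx0 : x0 ≠ 0) (y0 : Fin m2 → ℂ) (hy0 : y0 ≠ 0) :
    ∀ᵐ AB : (ZMod n → Fin m1 → ℂ) × (ZMod n → Fin m2 → ℂ),
      ∀ x : Fin m1 → ℂ, ∀ y : Fin m2 → ℂ,
        mApply AB.1 x * mApply AB.2 y = mApply AB.1 x0 * mApply AB.2 y0 →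
        ∃ σ : ℂ, σ ≠ 0 ∧ x = σ • x0 ∧ y = σ⁻¹ • y0 := by
  have hA := (Measure.quasiMeasurePreserving_fst
    (μ := (volume : Measure (ZMod n → Fin m1 → ℂ)))
    (ν := (volume : Measure (ZMod n → Fin m2 → ℂ)))).ae (ae_mApply_ne_zero x0 hx0)
  have hB := (Measure.quasiMeasurePreserving_snd
    (μ := (volume : Measure (ZMod n → Fin m1 → ℂ)))
    (ν := (volume : Measure (ZMod n → Fin m2 → ℂ)))).ae (ae_mApply_ne_zero y0 hy0)
  have hinj := ae_injective (n := n) (m1 := m1) (m2 := m2) (by omega)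
  have hdim := measure_exists_param_eq_zero
    (volume : Measure ((ZMod n → Fin m1 → ℂ) × (ZMod n → Fin m2 → ℂ)))
    (P := Fin m1 ⊕ Fin m2) (by simpa using hn)
    (fun k B p i => p (.inl i) * mApply B (fun j => p (.inr j)) k - x0 i * mApply B y0 k)
    (fun k i => by unfold mApply; fun_prop)
  have hdim' := measure_eq_zero_iff_ae_notMem.1 hdim
  rw [← Measure.volume_eq_prod] at hA hB
  filter_upwards [hA, hB, hinj, hdim'] with ⟨A, B⟩ hA hB hinj hdim x y hxy
  dsimp only at hA hB hinj hxy
  have hk := fun k => congrFun hxy k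
  simp only [Pi.mul_apply] at hk
  obtain ⟨k, hvk⟩ : ∃ k, ∀ i, x i * mApply B y k - x0 i * mApply B y0 k = 0 := by
    by_contra! hne
    refine hdim ⟨Sum.elim x y, fun k => ⟨Function.ne_iff.2 (hne k), ?_⟩⟩
    have h := hk k
    rw [← sub_eq_zero] at h
    rw [← h]
    simp only [Sum.elim_inl, Sum.elim_inr, mul_sub, Finset.sum_sub_distrib, ← mul_assoc,
      ← Finset.sum_mul]
    rfl
  have hByk : mApply B y k ≠ 0 := by
    intro h
    apply hx0
    funext i
    simpa [h, hB k] using hvk i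
  set c : ℂ := mApply B y0 k / mApply B y k with hc
  have hc0 : c ≠ 0 := div_ne_zero (hB k) hByk
  have hx : x = c • x0 := by
    funext i
    rw [Pi.smul_apply, smul_eq_mul, hc]
    field_simp
    linear_combination hvk i
  have hAx : ∀ k, mApply A x k = c * mApply A x0 k := by
    intro k
    simp only [mApply, hx, Pi.smul_apply, smul_eq_mul, Finset.mul_sum]
    exact Finset.sum_congr rfl fun i _ => by ring
  have hw : c • y - y0 = 0 := by
    apply hinj
    funext k
    have h1 : mApply B (c • y - y0) k = c * mApply B y k - mApply B y0 k := by
      simp only [mApply, Pi.sub_apply, Pi.smul_apply, smul_eq_mul, mul_sub,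
        Finset.sum_sub_distrib, Finset.mul_sum]
      congr 1
      exact Finset.sum_congr rfl fun i _ => by ring
    rw [h1]
    apply mul_left_cancel₀ (hA k)
    have h := hk k
    rw [hAx k] at h
    simp only [Pi.zero_apply]
    linear_combination h
  refine ⟨c, hc0, hx, ?_⟩
  rw [← sub_eq_zero.1 hw, inv_smul_smul₀ hc0]

open ZMod in
lemma dft_mApply {n m : ℕ} [NeZero n] (D : ZMod n → Fin m → ℂ) (x : Fin m → ℂ) :
    mApply (dft D) x = dft (mApply D x) := by
  funext k
  simp only [mApply, dft_apply, Finset.sum_apply, Pi.smul_apply, smul_eq_mul, Finset.sum_mul,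
    Finset.mul_sum]
  rw [Finset.sum_comm]
  simp only [mul_assoc]

open ZMod in
/-- The convolution theorem for the discrete Fourier transform. -/
lemma dft_cconv {n : ℕ} [NeZero n] (u v : ZMod n → ℂ) :
    dft (cconv u v) = dft u * dft v := by
  funext k
  simp only [cconv, Pi.mul_apply, dft_apply, smul_eq_mul]
  rw [Finset.sum_mul_sum]
  simp only [Finset.mul_sum]
  rw [Finset.sum_comm]
  refine Finset.sum_congr rfl fun j _ => ?_
  rw [← Equiv.sum_comp (Equiv.addRight j)]
  refine Finset.sum_congr rfl fun l _ => ?_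
  have h : -((l + j) * k) = -(j * k) + -(l * k) := by ring
  simp only [Equiv.coe_addRight, add_sub_cancel_right, h, AddChar.map_add_eq_mul]
  ring

/-- Weak identifiability of blind deconvolution with subspace constraints:
if `n > m1 + m2`, then for Lebesgue-almost all `(D, E)`, every `(x, y)` with
`(Dx) ⊛ (Ey) = (Dx0) ⊛ (Ey0)` is a scaled version of `(x0, y0)`. -/
theorem weak_identifiability_subspace (n m1 m2 : ℕ) [NeZero n]
    (hm1 : 0 < m1) (hm2 : 0 < m2) (hn : m1 + m2 < n)
    (x0 : Fin m1 → ℂ) (hx0 : x0 ≠ 0) (y0 : Fin m2 → ℂ) (hy0 : y0 ≠ 0) :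
    ∀ᵐ DE : (ZMod n → Fin m1 → ℂ) × (ZMod n → Fin m2 → ℂ),
      ∀ x : Fin m1 → ℂ, ∀ y : Fin m2 → ℂ,
        cconv (mApply DE.1 x) (mApply DE.2 y) = cconv (mApply DE.1 x0) (mApply DE.2 y0) →
        ∃ σ : ℂ, σ ≠ 0 ∧ x = σ • x0 ∧ y = σ⁻¹ • y0 := by
  have h := ae_identifiable_mul n m1 m2 hn x0 hx0 y0 hy0
  let T : ((ZMod n → Fin m1 → ℂ) × (ZMod n → Fin m2 → ℂ)) ≃ₗ[ℝ]
      ((ZMod n → Fin m1 → ℂ) × (ZMod n → Fin m2 → ℂ)) :=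
    (ZMod.dft.prodCongr ZMod.dft).restrictScalars ℝ
  rw [ae_iff] at h ⊢
  have hpre := Measure.addHaar_preimage_linearEquiv
    (volume : Measure ((ZMod n → Fin m1 → ℂ) × (ZMod n → Fin m2 → ℂ))) T
  refine measure_mono_null (fun DE hDE => ?_) ((hpre _).trans (by rw [h, mul_zero]))
  refine fun hT => hDE fun x y hxy => hT x y ?_
  have hF := congrArg ZMod.dft hxy
  simp only [dft_cconv, ← dft_mApply] at hF
  exact hF
end

section
/- Let n, m1, m2 be positive integers with n > m1 + m2. Fix x0 ∈ ℝ^{m1} with x0 ≠ 0 and y0 ∈ ℝ^{m2} with y0 ≠ 0. Then for Lebesgue-almost all pairs (D, E) ∈ ℝ^{n×m1} × ℝ^{n×m2}, every pair (x, y) ∈ ℝ^{m1} × ℝ^{m2} satisfying (D x) ⊛ (E y) = (D x0) ⊛ (E y0) satisfies x = σ x0 and y = σ⁻¹ y0 for some nonzero σ ∈ ℝ. (Weak identifiability of real blind deconvolution with subspace constraints, at the same sample complexity as the complex case.) -/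
/-!
Circular convolution is multiplication by a circulant matrix, so `v` is invertible for `⊛` exactly
when `det (circulant v) ≠ 0`. For almost all `(D, E)` both `D x0` and `E y0` are invertible
(`ae_det_circulant_mApplyR_ne_zero`), and then so are both factors of any other solution.

The core is a dimension count. Suppose `(x, y)` is a solution with `x` not proportional to `x0`, and
pick a functional `φ`, from a finite family depending only on `x0`, with `φ ⬝ᵥ x0 = 0` and
`φ ⬝ᵥ x ≠ 0`. If `φ i = 1`, then `D = A + q φᵀ` with `q` the column `i` of `D` and `A` vanishing in
column `i`. As `A x0 = D x0` and `D x = A x + (φ ⬝ᵥ x) q`, the equation determines `q` as a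
differentiable function of `(A, E, x, y)`, by inverting `E y`. The bad pairs therefore lie in the
image of a differentiable map from a space of dimension `n (m1 - 1) + n m2 + m1 + m2`, which is less
than `n m1 + n m2`, and Sard's theorem makes this image null (`ae_dotProduct_eq_zero`).
Hence `x = s • x0`, and exchanging the roles of the factors gives `y = t • y0`; comparing both sides
of the equation, which are nonzero, yields `s * t = 1`.
-/

open MeasureTheory Filter

/-- Circular convolution of two vectors in `ℝ^n` indexed by `ZMod n`. -/
noncomputable def cconvR {n : ℕ} [NeZero n] (u v : ZMod n → ℝ) : ZMod n → ℝ :=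
  fun k => ∑ j : ZMod n, u j * v (k - j)

/-- Matrix-vector multiplication `D x` for `D ∈ ℝ^{n×m}`. -/
noncomputable def mApplyR {n m : ℕ} [NeZero n] (D : ZMod n → Fin m → ℝ) (x : Fin m → ℝ) :
    ZMod n → ℝ :=
  fun k => ∑ i, D k i * x i

open scoped Matrix

/-! ### Images of lower-dimensional spaces -/

/-- The case of Sard's theorem in which the source has smaller dimension than the target:
such an image is a null set. -/
lemma measure_image_eq_zero_of_finrank_lt {P V : Type*}
    [NormedAddCommGroup P] [NormedSpace ℝ P] [FiniteDimensional ℝ P]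
    [NormedAddCommGroup V] [NormedSpace ℝ V] [FiniteDimensional ℝ V]
    [MeasurableSpace V] [BorelSpace V] (μ : Measure V) [μ.IsAddHaarMeasure]
    (h : Module.finrank ℝ P < Module.finrank ℝ V) (f : P → V) (s : Set P)
    (hf : ∀ p ∈ s, DifferentiableAt ℝ f p) : μ (f '' s) = 0 := by
  obtain ⟨ι, hι⟩ := finrank_le_iff_exists_linearMap.1 h.le
  obtain ⟨L, hL⟩ := ι.exists_leftInverse_of_injective (LinearMap.ker_eq_bot.2 hι)
  have hLι : ∀ p, L (ι p) = p := fun p => LinearMap.congr_fun hL p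
  let Lc : V →L[ℝ] P := LinearMap.toContinuousLinearMap L
  have hsub : f '' s ⊆ (f ∘ Lc) '' (Lc ⁻¹' s) := by
    rintro _ ⟨p, hp, rfl⟩
    exact ⟨ι p, by simpa [Lc, hLι] using hp, by simp [Lc, hLι]⟩
  -- Precomposing with `L` turns `f` into a self-map of `V`, to which Sard's theorem applies.
  refine measure_mono_null hsub ?_
  refine addHaar_image_eq_zero_of_det_fderivWithin_eq_zero μ
    (f' := fun v => (fderiv ℝ f (Lc v)).comp Lc) (fun v hv => ?_) (fun v hv => ?_)
  · exact ((hf _ hv).hasFDerivAt.comp v Lc.hasFDerivAt).hasFDerivWithinAt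
  · -- An invertible derivative would embed `V` into `P` through `L`.
    by_contra hdet
    have hinj : Function.Injective ((fderiv ℝ f (Lc v)).comp Lc : V →ₗ[ℝ] V) :=
      (LinearMap.equivOfDetNeZero _ hdet).injective
    have hLinj : Function.Injective L := by
      intro a b hab
      apply hinj
      simp [Lc, hab]
    exact absurd (LinearMap.finrank_le_finrank_of_injective hLinj) (not_le.2 h)

/-! ### Convolution and circulant matrices -/

lemma cconvR_eq_mulVec {n : ℕ} [NeZero n] (u v : ZMod n → ℝ) :
    cconvR u v = Matrix.circulant v *ᵥ u := by
  ext k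
  simp [cconvR, Matrix.mulVec, dotProduct, Matrix.circulant_apply, mul_comm]

lemma circulant_cconvR {n : ℕ} [NeZero n] (u v : ZMod n → ℝ) :
    Matrix.circulant (cconvR u v) = Matrix.circulant v * Matrix.circulant u := by
  rw [cconvR_eq_mulVec, Matrix.circulant_mul]

lemma cconvR_comm {n : ℕ} [NeZero n] (u v : ZMod n → ℝ) : cconvR u v = cconvR v u := by
  apply Matrix.circulant_injective
  rw [circulant_cconvR, circulant_cconvR, Matrix.circulant_mul_comm]

lemma mApplyR_smul {n m : ℕ} [NeZero n] (D : ZMod n → Fin m → ℝ) (t : ℝ) (x : Fin m → ℝ) :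
    mApplyR D (t • x) = t • mApplyR D x := by
  ext k
  simp only [mApplyR, Pi.smul_apply, smul_eq_mul, Finset.mul_sum]
  exact Finset.sum_congr rfl fun i _ => by ring

lemma cconvR_smul_smul {n : ℕ} [NeZero n] (s t : ℝ) (u v : ZMod n → ℝ) :
    cconvR (s • u) (t • v) = (s * t) • cconvR u v := by
  ext k
  simp only [cconvR, Pi.smul_apply, smul_eq_mul, Finset.mul_sum]
  exact Finset.sum_congr rfl fun i _ => by ring

/-! ### Generic invertibility -/

/-- Almost every vector is invertible for circular convolution: on each line in the direction of
the convolution unit, the determinant is, up to sign, a characteristic polynomial. -/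
lemma ae_det_circulant_ne_zero (n : ℕ) [NeZero n] :
    ∀ᵐ u : ZMod n → ℝ, (Matrix.circulant u).det ≠ 0 := by
  have hcont : Continuous fun u : ZMod n → ℝ => (Matrix.circulant u).det := by
    apply Continuous.matrix_det
    exact continuous_pi fun i => continuous_pi fun j => continuous_apply _
  refine ae_mem_of_ae_add_linearMap_mem
    (LinearMap.toSpanSingleton ℝ (ZMod n → ℝ) (Pi.single 0 (-1))) volume volume
    (s := {u | (Matrix.circulant u).det ≠ 0})
    ((isClosed_singleton.preimage hcont).isOpen_compl.measurableSet) fun u => ?_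
  set p := (Matrix.circulant u).charpoly with hp
  have hfin : {t : ℝ | p.eval t = 0}.Finite := by
    refine (p.roots.toFinset.finite_toSet).subset fun t ht => ?_
    simpa [(Matrix.charpoly_monic _).ne_zero, hp] using ht
  filter_upwards [hfin.countable.ae_notMem volume] with t ht
  have hM : Matrix.circulant (u + t • Pi.single 0 (-1))
      = -(Matrix.scalar (ZMod n) t - Matrix.circulant u) := by
    ext i j
    by_cases h : i = j
    · subst h; simp [Matrix.circulant_apply, Matrix.scalar_apply]; ring
    · simp [Matrix.circulant_apply, Matrix.scalar_apply, h, sub_eq_zero]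
  have ht' : (Matrix.scalar (ZMod n) t - Matrix.circulant u).det ≠ 0 := by
    rw [← Matrix.eval_charpoly]; exact ht
  simp only [LinearMap.toSpanSingleton_apply, hM, Matrix.det_neg]
  exact mul_ne_zero (pow_ne_zero _ (by norm_num)) ht'

lemma ae_det_circulant_mApplyR_ne_zero (n m : ℕ) [NeZero n] (x0 : Fin m → ℝ) (hx0 : x0 ≠ 0) :
    ∀ᵐ D : ZMod n → Fin m → ℝ, (Matrix.circulant (mApplyR D x0)).det ≠ 0 := by
  obtain ⟨i, hi⟩ := Function.ne_iff.1 hx0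
  let L : (ZMod n → Fin m → ℝ) →ₗ[ℝ] (ZMod n → ℝ) :=
    { toFun := fun D => mApplyR D x0
      map_add' := fun A B => by
        ext k; simp [mApplyR, add_mul, Finset.sum_add_distrib]
      map_smul' := fun c A => by
        ext k; simp [mApplyR, Finset.mul_sum, mul_assoc] }
  have hL : Function.Surjective L := fun u =>
    ⟨fun k => Pi.single i (u k / x0 i), by
      ext k
      have : x0 i ≠ 0 := hi
      simp [L, mApplyR, Pi.single_apply, this]⟩
  have hcont : Continuous fun u : ZMod n → ℝ => (Matrix.circulant u).det := by
    apply Continuous.matrix_det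
    exact continuous_pi fun i => continuous_pi fun j => continuous_apply _
  exact (ae_comp_linearMap_mem_iff L volume volume hL
    (s := {u | (Matrix.circulant u).det ≠ 0})
    ((isClosed_singleton.preimage hcont).isOpen_compl.measurableSet)).2
    (ae_det_circulant_ne_zero n)

/-! ### Parametrization of the bad pairs -/

lemma DifferentiableAt.matrix_det_of_entries {P ι : Type*} [NormedAddCommGroup P]
    [NormedSpace ℝ P] [Fintype ι] [DecidableEq ι] {M : P → Matrix ι ι ℝ} {p : P}
    (h : ∀ i j, DifferentiableAt ℝ (fun q => M q i j) p) :
    DifferentiableAt ℝ (fun q => (M q).det) p := by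
  simp only [Matrix.det_apply']
  refine DifferentiableAt.fun_sum fun σ _ => ?_
  exact (HasFDerivAt.finsetProd fun i _ =>
    (h (σ i) i).hasFDerivAt).differentiableAt.const_mul _

/-- The parameters `(B, E, x, y)` of the bad pairs. Here `B` holds the columns other than `i`
of the matrix `A = D - q φᵀ`, where `q` is the column `i` of `D`; the column `i` of `A` is zero. -/
abbrev BadParam (n m1 m2 : ℕ) (i : Fin m1) : Type :=
  (ZMod n → {j : Fin m1 // j ≠ i} → ℝ) × (ZMod n → Fin m2 → ℝ) × (Fin m1 → ℝ) × (Fin m2 → ℝ)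

lemma finrank_badParam (n m1 m2 : ℕ) [NeZero n] (hn : m1 + m2 < n) (i : Fin m1) :
    Module.finrank ℝ (BadParam n m1 m2 i) <
      Module.finrank ℝ ((ZMod n → Fin m1 → ℝ) × (ZMod n → Fin m2 → ℝ)) := by
  have hc : Fintype.card {j : Fin m1 // j ≠ i} = m1 - 1 := by simp
  have : 0 < m1 := i.pos
  obtain ⟨k, rfl⟩ : ∃ k, m1 = k + 1 := ⟨m1 - 1, by omega⟩
  simp only [BadParam, Module.finrank_prod, Module.finrank_pi_fintype, Module.finrank_self,
    Finset.sum_const, Finset.card_univ, ZMod.card, Fintype.card_fin, hc, smul_eq_mul]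
  simp only [mul_one, Nat.add_sub_cancel]
  nlinarith

section Parametrization

variable {n m1 m2 : ℕ} [NeZero n] {i : Fin m1}

/-- Insertion of a zero column at position `i`. -/
noncomputable def extendCol (B : ZMod n → {j : Fin m1 // j ≠ i} → ℝ) : ZMod n → Fin m1 → ℝ :=
  fun k j => if h : j ≠ i then B k ⟨j, h⟩ else 0

/-- The solution `w` of `w ⊛ (E y) = (A x0) ⊛ (E y0)` given by Cramer's rule, where `A` is
`extendCol` of the first parameter; a junk value if `E y` is not invertible. -/
noncomputable def solveConv (x0 : Fin m1 → ℝ) (y0 : Fin m2 → ℝ) (p : BadParam n m1 m2 i) :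
    ZMod n → ℝ :=
  fun k => (Matrix.circulant (mApplyR p.2.1 p.2.2.2)).det⁻¹ *
    ((Matrix.circulant (mApplyR p.2.1 p.2.2.2)).updateCol k
      (cconvR (mApplyR (extendCol p.1) x0) (mApplyR p.2.1 y0))).det

/-- The map whose image contains the bad pairs. Writing `A` for `B` with a zero column inserted,
its first component is the rank-one perturbation `A + q φᵀ` that maps `x` to `solveConv`, provided
`φ ⬝ᵥ x ≠ 0`. -/
noncomputable def badMap (x0 : Fin m1 → ℝ) (y0 : Fin m2 → ℝ) (φ : Fin m1 → ℝ)
    (p : BadParam n m1 m2 i) : (ZMod n → Fin m1 → ℝ) × (ZMod n → Fin m2 → ℝ) :=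
  (fun k j => extendCol p.1 k j +
    (solveConv x0 y0 p k - mApplyR (extendCol p.1) p.2.2.1 k) / (φ ⬝ᵥ p.2.2.1) * φ j, p.2.1)

lemma differentiable_extendCol_apply (k : ZMod n) (j : Fin m1) :
    Differentiable ℝ fun p : BadParam n m1 m2 i => extendCol p.1 k j := by
  unfold extendCol
  split_ifs with h
  · fun_prop
  · fun_prop

lemma differentiableAt_badMap (x0 : Fin m1 → ℝ) (y0 : Fin m2 → ℝ) (φ : Fin m1 → ℝ)
    (p : BadParam n m1 m2 i) (hdet : (Matrix.circulant (mApplyR p.2.1 p.2.2.2)).det ≠ 0)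
    (hφ : φ ⬝ᵥ p.2.2.1 ≠ 0) : DifferentiableAt ℝ (badMap x0 y0 φ) p := by
  have hA : ∀ k j, DifferentiableAt ℝ (fun p : BadParam n m1 m2 i => extendCol p.1 k j) p :=
    fun k j => differentiable_extendCol_apply k j p
  have hM : ∀ k j, DifferentiableAt ℝ (fun p : BadParam n m1 m2 i =>
      Matrix.circulant (mApplyR p.2.1 p.2.2.2) k j) p := by
    intro k j
    simp only [Matrix.circulant_apply, mApplyR]
    fun_prop
  have hb : ∀ k, DifferentiableAt ℝ (fun p : BadParam n m1 m2 i =>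
      cconvR (mApplyR (extendCol p.1) x0) (mApplyR p.2.1 y0) k) p := by
    intro k
    simp only [cconvR, mApplyR]
    fun_prop
  have hw : ∀ k, DifferentiableAt ℝ (fun p : BadParam n m1 m2 i => solveConv x0 y0 p k) p := by
    intro k
    refine DifferentiableAt.mul
      ((DifferentiableAt.matrix_det_of_entries hM).inv hdet)
      (DifferentiableAt.matrix_det_of_entries fun a b => ?_)
    simp only [Matrix.updateCol_apply]
    split_ifs
    · exact hb a
    · exact hM a b
  have hx : DifferentiableAt ℝ (fun p : BadParam n m1 m2 i => φ ⬝ᵥ p.2.2.1) p := by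
    simp only [dotProduct]
    fun_prop
  have hAx : ∀ k, DifferentiableAt ℝ (fun p : BadParam n m1 m2 i =>
      mApplyR (extendCol p.1) p.2.2.1 k) p := by
    intro k
    simp only [mApplyR]
    fun_prop
  refine DifferentiableAt.prodMk ?_ (by fun_prop)
  refine differentiableAt_pi.2 fun k => differentiableAt_pi.2 fun j => ?_
  simp only [div_eq_mul_inv]
  exact (hA k j).add ((((hw k).sub (hAx k)).mul (hx.inv hφ)).mul_const _)

/-- A pair `(D, E)` with a solution `(x, y)` such that `φ ⬝ᵥ x ≠ 0` and `E y` is invertible is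
recovered by `badMap` from `D - q φᵀ`, with `q` the column `i` of `D`, and from `E`, `x`, `y`. -/
lemma exists_badMap_eq (x0 : Fin m1 → ℝ) (y0 : Fin m2 → ℝ) (φ : Fin m1 → ℝ)
    (hφi : φ i = 1) (hφx0 : φ ⬝ᵥ x0 = 0)
    (D : ZMod n → Fin m1 → ℝ) (E : ZMod n → Fin m2 → ℝ) (x : Fin m1 → ℝ) (y : Fin m2 → ℝ)
    (hdet : (Matrix.circulant (mApplyR E y)).det ≠ 0) (hφ : φ ⬝ᵥ x ≠ 0)
    (heq : cconvR (mApplyR D x) (mApplyR E y) = cconvR (mApplyR D x0) (mApplyR E y0)) :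
    badMap (i := i) x0 y0 φ (fun k j => D k j - D k i * φ j, E, x, y) = (D, E) := by
  have hA : extendCol (fun k (j : {j : Fin m1 // j ≠ i}) => D k j - D k i * φ j)
      = fun k j => D k j - D k i * φ j := by
    ext k j
    by_cases h : j = i
    · subst h; simp [extendCol, hφi]
    · simp [extendCol, h]
  have hAz : ∀ z, mApplyR (fun k j => D k j - D k i * φ j) z
      = fun k => mApplyR D z k - D k i * (φ ⬝ᵥ z) := by
    intro z
    ext k
    simp only [mApplyR, dotProduct, sub_mul, Finset.sum_sub_distrib, Finset.mul_sum, mul_assoc]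
  have hAx0 : mApplyR (fun k j => D k j - D k i * φ j) x0 = mApplyR D x0 := by
    rw [hAz]; simp [hφx0]
  have hw : ∀ k, solveConv (i := i) x0 y0 (fun k j => D k j - D k i * φ j, E, x, y) k
      = mApplyR D x k := by
    intro k
    simp only [solveConv, hA, hAx0]
    rw [← heq, ← Matrix.cramer_apply, cconvR_eq_mulVec, Matrix.cramer_eq_adjugate_mulVec,
      Matrix.mulVec_mulVec, Matrix.adjugate_mul, Matrix.smul_mulVec, Matrix.one_mulVec,
      Pi.smul_apply, smul_eq_mul, inv_mul_cancel_left₀ hdet]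
  refine Prod.ext ?_ rfl
  ext k j
  simp only [badMap, hw, hA, hAz]
  field_simp
  ring

end Parametrization

/-! ### Almost sure proportionality -/

/-- For almost all pairs with invertible data, no spurious solution is detected by
the functional `φ`. -/
lemma ae_dotProduct_eq_zero (n m1 m2 : ℕ) [NeZero n] (hn : m1 + m2 < n)
    (x0 : Fin m1 → ℝ) (y0 : Fin m2 → ℝ) (φ : Fin m1 → ℝ) (i : Fin m1)
    (hφi : φ i = 1) (hφx0 : φ ⬝ᵥ x0 = 0) :
    ∀ᵐ DE : (ZMod n → Fin m1 → ℝ) × (ZMod n → Fin m2 → ℝ),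
      (Matrix.circulant (cconvR (mApplyR DE.1 x0) (mApplyR DE.2 y0))).det ≠ 0 →
      ∀ x : Fin m1 → ℝ, ∀ y : Fin m2 → ℝ,
        cconvR (mApplyR DE.1 x) (mApplyR DE.2 y) = cconvR (mApplyR DE.1 x0) (mApplyR DE.2 y0) →
        φ ⬝ᵥ x = 0 := by
  -- Instance search does not find this for functions into a function space.
  have : (volume : Measure ((ZMod n → Fin m1 → ℝ) × (ZMod n → Fin m2 → ℝ))).IsAddHaarMeasure := by
    have h1 : (volume : Measure (ZMod n → Fin m1 → ℝ)).IsAddHaarMeasure :=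
      Measure.pi.isAddHaarMeasure _
    have h2 : (volume : Measure (ZMod n → Fin m2 → ℝ)).IsAddHaarMeasure :=
      Measure.pi.isAddHaarMeasure _
    exact Measure.prod.instIsAddHaarMeasure _ _
  have hnull := measure_image_eq_zero_of_finrank_lt
    (volume : Measure ((ZMod n → Fin m1 → ℝ) × (ZMod n → Fin m2 → ℝ)))
    (finrank_badParam n m1 m2 hn i) (badMap x0 y0 φ)
    {p | (Matrix.circulant (mApplyR p.2.1 p.2.2.2)).det ≠ 0 ∧ φ ⬝ᵥ p.2.2.1 ≠ 0}
    (fun p hp => differentiableAt_badMap x0 y0 φ p hp.1 hp.2)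
  filter_upwards [measure_eq_zero_iff_ae_notMem.1 hnull] with ⟨D, E⟩ hDE hdet x y heq
  by_contra hφ
  have hdy : (Matrix.circulant (mApplyR E y)).det ≠ 0 := by
    rw [← heq, circulant_cconvR, Matrix.det_mul] at hdet
    exact left_ne_zero_of_mul hdet
  exact hDE ⟨_, ⟨hdy, hφ⟩, exists_badMap_eq x0 y0 φ hφi hφx0 D E x y hdy hφ heq⟩

/-- The first factor of every solution is proportional to `x0`, for almost all pairs; the
invertibility of the data, itself generic, is kept as a hypothesis. -/
lemma ae_left_mem_span (n m1 m2 : ℕ) [NeZero n] (hn : m1 + m2 < n)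
    (x0 : Fin m1 → ℝ) (hx0 : x0 ≠ 0) (y0 : Fin m2 → ℝ) :
    ∀ᵐ DE : (ZMod n → Fin m1 → ℝ) × (ZMod n → Fin m2 → ℝ),
      (Matrix.circulant (cconvR (mApplyR DE.1 x0) (mApplyR DE.2 y0))).det ≠ 0 →
      ∀ x : Fin m1 → ℝ, ∀ y : Fin m2 → ℝ,
        cconvR (mApplyR DE.1 x) (mApplyR DE.2 y) = cconvR (mApplyR DE.1 x0) (mApplyR DE.2 y0) →
        ∃ t : ℝ, x = t • x0 := by
  obtain ⟨l, hl⟩ := Function.ne_iff.1 hx0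
  replace hl : x0 l ≠ 0 := hl
  -- The functionals `x ↦ x i - (x0 i / x0 l) * x l`, for `i ≠ l`, cut out the line through `x0`.
  have key := fun i : {i : Fin m1 // i ≠ l} =>
    ae_dotProduct_eq_zero n m1 m2 hn x0 y0
      (Pi.single i.1 1 - Pi.single l (x0 i / x0 l)) i (by simp [i.2])
      (by simp [sub_dotProduct, hl])
  filter_upwards [ae_all_iff.2 key] with DE hDE hdet x y heq
  refine ⟨x l / x0 l, ?_⟩
  ext i
  by_cases hi : i = l
  · subst hi; simp [hl]
  · have := hDE ⟨i, hi⟩ hdet x y heq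
    simp only [sub_dotProduct, single_dotProduct, one_mul] at this
    simp only [Pi.smul_apply, smul_eq_mul]
    rw [sub_eq_zero.1 this]
    ring

/-- Weak identifiability of real blind deconvolution with subspace constraints:
if `n > m1 + m2`, then for Lebesgue-almost all real `(D, E)`, every `(x, y)` with
`(Dx) ⊛ (Ey) = (Dx0) ⊛ (Ey0)` is a scaled version of `(x0, y0)`. -/
theorem weak_identifiability_subspace_real (n m1 m2 : ℕ) [NeZero n]
    (hm1 : 0 < m1) (hm2 : 0 < m2) (hn : m1 + m2 < n)
    (x0 : Fin m1 → ℝ) (hx0 : x0 ≠ 0) (y0 : Fin m2 → ℝ) (hy0 : y0 ≠ 0) :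
    ∀ᵐ DE : (ZMod n → Fin m1 → ℝ) × (ZMod n → Fin m2 → ℝ),
      ∀ x : Fin m1 → ℝ, ∀ y : Fin m2 → ℝ,
        cconvR (mApplyR DE.1 x) (mApplyR DE.2 y) = cconvR (mApplyR DE.1 x0) (mApplyR DE.2 y0) →
        ∃ σ : ℝ, σ ≠ 0 ∧ x = σ • x0 ∧ y = σ⁻¹ • y0 := by
  have hu := Measure.quasiMeasurePreserving_fst (μ := (volume : Measure (ZMod n → Fin m1 → ℝ)))
    (ν := (volume : Measure (ZMod n → Fin m2 → ℝ))) |>.ae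
      (ae_det_circulant_mApplyR_ne_zero n m1 x0 hx0)
  have hv := Measure.quasiMeasurePreserving_snd (μ := (volume : Measure (ZMod n → Fin m1 → ℝ)))
    (ν := (volume : Measure (ZMod n → Fin m2 → ℝ))) |>.ae
      (ae_det_circulant_mApplyR_ne_zero n m2 y0 hy0)
  have hswap := (Measure.measurePreserving_swap
    (μ := (volume : Measure (ZMod n → Fin m1 → ℝ)))
    (ν := (volume : Measure (ZMod n → Fin m2 → ℝ)))).quasiMeasurePreserving.ae
      (ae_left_mem_span n m2 m1 (by omega) y0 hy0 x0)
  rw [← Measure.volume_eq_prod] at hu hv hswap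
  filter_upwards [hu, hv, ae_left_mem_span n m1 m2 hn x0 hx0 y0, hswap]
    with ⟨D, E⟩ hu hv hX hY x y heq
  simp only [Prod.swap_prod_mk] at hu hv hX hY
  have hdet : (Matrix.circulant (cconvR (mApplyR D x0) (mApplyR E y0))).det ≠ 0 := by
    rw [circulant_cconvR, Matrix.det_mul]
    exact mul_ne_zero hv hu
  obtain ⟨s, rfl⟩ := hX hdet x y heq
  obtain ⟨t, rfl⟩ := hY (by rwa [cconvR_comm]) y (s • x0) (by rw [cconvR_comm, heq, cconvR_comm])
  rw [mApplyR_smul, mApplyR_smul, cconvR_smul_smul] at heq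
  have hw : cconvR (mApplyR D x0) (mApplyR E y0) ≠ 0 := by
    intro h0
    rw [h0, Matrix.circulant_zero, Matrix.det_zero] at hdet
    exact hdet rfl
  have hst : s * t = 1 := smul_left_injective ℝ hw (by simpa using heq)
  exact ⟨s, left_ne_zero_of_mul_eq_one hst, rfl, by rw [eq_inv_of_mul_eq_one_right hst]⟩
end

section
/- Let Ω ⊆ ℂ^{m1×m2} be a nonempty bounded set (Frobenius norm), and let n be a positive integer with n > upper Minkowski dimension of Ω. Then for Lebesgue-almost all tuples a_1, …, a_n ∈ ℂ^{m1} and b_1, …, b_n ∈ ℂ^{m2}, the following holds: for all M1, M2 ∈ Ω, if a_j* M1 (conj b_j) = a_j* M2 (conj b_j) for all j = 1, …, n, then M1 = M2. (Strong identifiability of bounded-set matrix recovery from rank-one measurements.) -/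
/-!
Let `M = M1 - M2` for two points of `Ω` with some entry `|M i j| ≥ η`. For `0 < p < 2` the function
`|z| ^ (-p)` is locally integrable on `ℂ`, uniformly under translation. Since `a* M (conj b)` is
affine in `a i`, with slope `(M (conj b)) i`, which is in turn affine in `b j` with slope `M i j`,
integrating `|a* M (conj b)| ^ (-p)` over a bounded box gives a finite multiple of `|M i j| ^ (-p)`
(`lintegral_pi_le`). Markov's inequality yields the small-ball bound
`vol {|a* M (conj b)| ≤ δ} ≤ C δ ^ p` (`measure_rankOneMeas_le`), and independence its `n`-th power
for `n` measurements.

If the upper Minkowski dimension is less than `d < n`, then `Ω` has at most `ρ ^ (-d)` balls in a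
`ρ`-cover for small `ρ` (`eventually_coveringNumber_le`). Measurements from a bounded box are
Lipschitz, so a tuple that fails to separate `M1` and `M2` makes all `n` measurements of the
difference of two centers `O(ρ)`. A union bound over pairs of centers gives measure
`O(ρ ^ (-2 d + p n))`; with `p = (d + n) / n < 2` the exponent is `n - d > 0`, so the set of such
tuples is null (`volume_restrict_bad_eq_zero`). Countably many choices of `i, j, η` and of the box
exhaust all cases. No measurability of `Ω` is needed, as only outer measure is used.
-/

open MeasureTheory Filter

/-- Covering number: the minimal number of closed balls of radius `ρ`
(with arbitrary centers) needed to cover `Ω`. -/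
noncomputable def coveringNumber {X : Type*} [PseudoMetricSpace X] (Ω : Set X) (ρ : ℝ) : ℕ :=
  sInf {k : ℕ | ∃ C : Finset X, C.card = k ∧ Ω ⊆ ⋃ c ∈ C, Metric.closedBall c ρ}

/-- Upper Minkowski dimension: `limsup_{ρ → 0⁺} log N_Ω(ρ) / log (1/ρ)`. -/
noncomputable def upperMinkowskiDim {X : Type*} [PseudoMetricSpace X] (Ω : Set X) : ℝ :=
  Filter.limsup (fun ρ : ℝ => Real.log (coveringNumber Ω ρ) / Real.log (1 / ρ))
    (nhdsWithin 0 (Set.Ioi 0))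

/-- The rank-one measurement `a* M (conj b) = ∑_{i,j} conj(a_i) M_{ij} conj(b_j)`. -/
noncomputable def rankOneMeas {m1 m2 : ℕ} (a : Fin m1 → ℂ) (b : Fin m2 → ℂ)
    (M : EuclideanSpace ℂ (Fin m1 × Fin m2)) : ℂ :=
  ∑ i : Fin m1, ∑ j : Fin m2, (starRingEnd ℂ) (a i) * M (i, j) * (starRingEnd ℂ) (b j)

/-! ### Small-ball estimates for rank-one measurements -/

theorem lintegral_enorm_rpow_ball_lt_top {p : ℝ} (hp2 : p < 2) (R : ℝ) :
    ∫⁻ w in Metric.ball (0 : ℂ) R, ‖w‖ₑ ^ (-p) < ⊤ := by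
  have hint : IntegrableOn (fun w : ℂ => ‖w‖ ^ (-p)) (Metric.ball 0 R) := by
    refine integrableOn_ball_of_norm_le_rpow (C := 1) (α := p) ?_ ?_ ?_ ?_
    · simp
    · simpa using hp2
    · refine Eventually.of_forall fun w => ?_
      rw [Real.norm_of_nonneg (by positivity), one_mul]
    · exact (by fun_prop : Measurable fun w : ℂ => ‖w‖ ^ (-p)).aestronglyMeasurable
  refine lt_of_le_of_lt (le_of_eq ?_) hint.2
  refine lintegral_congr_ae (ae_restrict_of_ae ?_)
  filter_upwards [(Set.countable_singleton (0 : ℂ)).ae_notMem volume] with w hw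
  have hw' : 0 < ‖w‖ := norm_pos_iff.2 hw
  rw [Real.enorm_of_nonneg (by positivity), ← ofReal_norm, ENNReal.ofReal_rpow_of_pos hw']

/-- Translates of the singularity integrate uniformly. -/
theorem exists_lintegral_add_le {p : ℝ} (hp : 0 < p) (hp2 : p < 2) (R : ℝ) :
    ∃ C : ENNReal, C ≠ 0 ∧ C ≠ ⊤ ∧ ∀ z : ℂ,
      ∫⁻ w in Metric.ball (0 : ℂ) R, ‖w + z‖ₑ ^ (-p) ≤ C := by
  set f : ℂ → ENNReal := fun w => ‖w‖ₑ ^ (-p) with hf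
  refine ⟨1 + volume (Metric.ball (0 : ℂ) R) + ∫⁻ w in Metric.ball (0 : ℂ) 1, f w, ?_, ?_, ?_⟩
  · simp
  · have h1 := lintegral_enorm_rpow_ball_lt_top hp2 1
    have h2 : volume (Metric.ball (0 : ℂ) R) < ⊤ := measure_ball_lt_top
    exact (ENNReal.add_lt_top.2 ⟨ENNReal.add_lt_top.2 ⟨ENNReal.one_lt_top, h2⟩, h1⟩).ne
  · intro z
    have hpt : ∀ w : ℂ, f w ≤ 1 + (Metric.ball (0 : ℂ) 1).indicator f w := by
      intro w
      by_cases hw : w ∈ Metric.ball (0 : ℂ) 1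
      · rw [Set.indicator_of_mem hw]; exact le_add_self
      · rw [Set.indicator_of_notMem hw, add_zero, hf]
        have h1 : (1 : ENNReal) ≤ ‖w‖ₑ := by
          rw [← ofReal_norm, ← ENNReal.ofReal_one]
          apply ENNReal.ofReal_le_ofReal
          simpa using hw
        simp only [ENNReal.rpow_neg]
        exact ENNReal.inv_le_one.2 (ENNReal.one_le_rpow h1 hp)
    calc ∫⁻ w in Metric.ball (0 : ℂ) R, f (w + z)
        ≤ ∫⁻ w in Metric.ball (0 : ℂ) R, (1 + (Metric.ball (0 : ℂ) 1).indicator f (w + z)) :=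
          lintegral_mono fun w => hpt _
      _ = volume (Metric.ball (0 : ℂ) R)
          + ∫⁻ w in Metric.ball (0 : ℂ) R, (Metric.ball (0 : ℂ) 1).indicator f (w + z) := by
          rw [lintegral_add_left measurable_const]; simp
      _ ≤ volume (Metric.ball (0 : ℂ) R)
          + ∫⁻ w, (Metric.ball (0 : ℂ) 1).indicator f (w + z) := by
          gcongr; exact Measure.restrict_le_self
      _ = volume (Metric.ball (0 : ℂ) R) + ∫⁻ w in Metric.ball (0 : ℂ) 1, f w := by
          rw [lintegral_add_right_eq_self (fun w => (Metric.ball (0 : ℂ) 1).indicator f w) z,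
            lintegral_indicator Metric.isOpen_ball.measurableSet]
      _ ≤ _ := by gcongr; exact le_add_self

/-- The constant does not depend on the affine map; at `u = 0` the right-hand side is `⊤`. -/
theorem exists_lintegral_affine_le {p : ℝ} (hp : 0 < p) (hp2 : p < 2) (R : ℝ) :
    ∃ C : ENNReal, C ≠ 0 ∧ C ≠ ⊤ ∧ ∀ u r : ℂ,
      ∫⁻ w in Metric.ball (0 : ℂ) R, ‖u * (starRingEnd ℂ) w + r‖ₑ ^ (-p) ≤ C * ‖u‖ₑ ^ (-p) := by
  obtain ⟨C, h0, ht, hC⟩ := exists_lintegral_add_le hp hp2 R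
  refine ⟨C, h0, ht, fun u r => ?_⟩
  rcases eq_or_ne u 0 with rfl | hu
  · simp [ENNReal.zero_rpow_of_neg (neg_lt_zero.2 hp), ENNReal.mul_top h0]
  · have key : ∀ w : ℂ, ‖u * (starRingEnd ℂ) w + r‖ₑ ^ (-p) =
        ‖u‖ₑ ^ (-p) * ‖w + (starRingEnd ℂ) (r / u)‖ₑ ^ (-p) := by
      intro w
      have : u * (starRingEnd ℂ) w + r = u * (starRingEnd ℂ) (w + (starRingEnd ℂ) (r / u)) := by
        rw [map_add, Complex.conj_conj]; field_simp
      rw [this, enorm_mul, ENNReal.mul_rpow_of_ne_top enorm_ne_top enorm_ne_top]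
      congr 2
      rw [← ofReal_norm, ← ofReal_norm, RCLike.norm_conj]
    simp_rw [key]
    rw [lintegral_const_mul _ (by fun_prop), mul_comm]
    gcongr
    exact hC _

theorem measurable_enorm_form_rpow {m : ℕ} (u : Fin m → ℂ) (p : ℝ) :
    Measurable fun a : Fin m → ℂ => ‖∑ k, u k * (starRingEnd ℂ) (a k)‖ₑ ^ (-p) := by
  have h : Continuous fun a : Fin m → ℂ => ∑ k, u k * (starRingEnd ℂ) (a k) :=
    continuous_finsetSum _ fun k _ =>
      continuous_const.mul (Complex.continuous_conj.comp (continuous_apply k))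
  exact h.measurable.enorm.pow_const _

/-- Fubini reduces a linear form in several variables to the `i`-th variable, the remaining terms
acting as the translation part of an affine map. -/
theorem lintegral_pi_le {ν : Measure ℂ} [IsFiniteMeasure ν] {p : ℝ} {C : ENNReal}
    (hC : ∀ u r : ℂ, ∫⁻ w, ‖u * (starRingEnd ℂ) w + r‖ₑ ^ (-p) ∂ν ≤ C * ‖u‖ₑ ^ (-p))
    {m : ℕ} (u : Fin m → ℂ) (i : Fin m) :
    ∫⁻ a, ‖∑ k, u k * (starRingEnd ℂ) (a k)‖ₑ ^ (-p) ∂(Measure.pi fun _ : Fin m => ν)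
      ≤ C * (ν Set.univ) ^ (m - 1) * ‖u i‖ₑ ^ (-p) := by
  obtain _ | m := m
  · exact i.elim0
  have hmp := (measurePreserving_piFinSuccAbove (fun _ : Fin (m + 1) => ν) i).symm
  rw [← hmp.lintegral_comp (measurable_enorm_form_rpow u p), lintegral_prod_symm' _ ?_]
  · calc _ ≤ ∫⁻ _ : Fin m → ℂ, C * ‖u i‖ₑ ^ (-p) ∂(Measure.pi fun _ : Fin m => ν) := by
          refine lintegral_mono fun y => ?_
          refine le_trans (le_of_eq ?_)
            (hC (u i) (∑ k, u (i.succAbove k) * (starRingEnd ℂ) (y k)))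
          refine lintegral_congr fun w => ?_
          have h0 : (MeasurableEquiv.piFinSuccAbove (fun _ => ℂ) i).symm (w, y) =
              i.insertNth w y := rfl
          simp [Fin.sum_univ_succAbove _ i, h0]
      _ = _ := by
          simp [Measure.pi_univ]; ring
  · exact (measurable_enorm_form_rpow u p).comp hmp.measurable

theorem rankOneMeas_eq {m1 m2 : ℕ} (a : Fin m1 → ℂ) (b : Fin m2 → ℂ)
    (M : EuclideanSpace ℂ (Fin m1 × Fin m2)) :
    rankOneMeas a b M =
      ∑ i, (∑ j, M (i, j) * (starRingEnd ℂ) (b j)) * (starRingEnd ℂ) (a i) := by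
  unfold rankOneMeas
  simp_rw [Finset.sum_mul]
  exact Finset.sum_congr rfl fun i _ => Finset.sum_congr rfl fun j _ => by ring

theorem measurable_rankOneMeas {m1 m2 : ℕ} (M : EuclideanSpace ℂ (Fin m1 × Fin m2)) :
    Measurable fun x : (Fin m1 → ℂ) × (Fin m2 → ℂ) => rankOneMeas x.1 x.2 M := by
  unfold rankOneMeas
  fun_prop

/-- Small-ball estimate for one rank-one measurement, by Markov's inequality applied to the `-p`-th
power of its modulus, integrated first in `a` and then in `b`. -/
theorem measure_rankOneMeas_le {ν : Measure ℂ} [IsFiniteMeasure ν] {p : ℝ} (hp : 0 < p)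
    {C : ENNReal}
    (hC : ∀ u r : ℂ, ∫⁻ w, ‖u * (starRingEnd ℂ) w + r‖ₑ ^ (-p) ∂ν ≤ C * ‖u‖ₑ ^ (-p))
    {m1 m2 : ℕ} (M : EuclideanSpace ℂ (Fin m1 × Fin m2)) (i : Fin m1) (j : Fin m2)
    {δ : ℝ} (hδ : 0 < δ) :
    ((Measure.pi fun _ : Fin m1 => ν).prod (Measure.pi fun _ : Fin m2 => ν))
        {x | ‖rankOneMeas x.1 x.2 M‖ ≤ δ}
      ≤ ENNReal.ofReal δ ^ p * ((C * (ν Set.univ) ^ (m1 - 1)) *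
        ((C * (ν Set.univ) ^ (m2 - 1)) * ‖M (i, j)‖ₑ ^ (-p))) := by
  set P := (Measure.pi fun _ : Fin m1 => ν).prod (Measure.pi fun _ : Fin m2 => ν)
  have hmeas := measurable_rankOneMeas M
  have hpos : 0 < ENNReal.ofReal δ ^ p := ENNReal.rpow_pos (by simpa using hδ) (by simp)
  have hfin : ENNReal.ofReal δ ^ p ≠ ⊤ := ENNReal.rpow_ne_top_of_nonneg hp.le (by simp)
  have hint : ∫⁻ x, ‖rankOneMeas x.1 x.2 M‖ₑ ^ (-p) ∂P ≤ (C * (ν Set.univ) ^ (m1 - 1)) *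
        ((C * (ν Set.univ) ^ (m2 - 1)) * ‖M (i, j)‖ₑ ^ (-p)) := by
    rw [lintegral_prod_symm' _ (by fun_prop)]
    calc _ ≤ ∫⁻ b, (C * (ν Set.univ) ^ (m1 - 1)) *
            ‖∑ j, M (i, j) * (starRingEnd ℂ) (b j)‖ₑ ^ (-p) ∂(Measure.pi fun _ : Fin m2 => ν) := by
          refine lintegral_mono fun b => ?_
          simp_rw [rankOneMeas_eq]
          exact lintegral_pi_le hC (fun i => ∑ j, M (i, j) * (starRingEnd ℂ) (b j)) i
      _ = (C * (ν Set.univ) ^ (m1 - 1)) * ∫⁻ b,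
            ‖∑ j, M (i, j) * (starRingEnd ℂ) (b j)‖ₑ ^ (-p) ∂(Measure.pi fun _ : Fin m2 => ν) :=
          lintegral_const_mul _ (measurable_enorm_form_rpow (fun j => M (i, j)) p)
      _ ≤ _ := by
          gcongr
          exact lintegral_pi_le hC (fun j => M (i, j)) j
  have hsub : {x : (Fin m1 → ℂ) × (Fin m2 → ℂ) | ‖rankOneMeas x.1 x.2 M‖ ≤ δ} ⊆
      {x | (ENNReal.ofReal δ ^ p)⁻¹ ≤ ‖rankOneMeas x.1 x.2 M‖ₑ ^ (-p)} := by
    intro x hx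
    simp only [Set.mem_ofPred_eq, ENNReal.rpow_neg] at hx ⊢
    gcongr
    rw [← ofReal_norm]
    exact ENNReal.ofReal_le_ofReal hx
  have hmk := mul_meas_ge_le_lintegral (μ := P)
    (f := fun x : (Fin m1 → ℂ) × (Fin m2 → ℂ) => ‖rankOneMeas x.1 x.2 M‖ₑ ^ (-p))
    (by fun_prop) (ENNReal.ofReal δ ^ p)⁻¹
  calc _ ≤ P {x | (ENNReal.ofReal δ ^ p)⁻¹ ≤ ‖rankOneMeas x.1 x.2 M‖ₑ ^ (-p)} := measure_mono hsub
    _ = ENNReal.ofReal δ ^ p * ((ENNReal.ofReal δ ^ p)⁻¹ *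
        P {x | (ENNReal.ofReal δ ^ p)⁻¹ ≤ ‖rankOneMeas x.1 x.2 M‖ₑ ^ (-p)}) := by
        rw [← mul_assoc, ENNReal.mul_inv_cancel hpos.ne' hfin, one_mul]
    _ ≤ _ := by
        exact mul_le_mul_right (hmk.trans hint) _

/-- Distinct measurements are independent. -/
theorem measure_forall_rankOneMeas_le {m1 m2 : ℕ} (n : ℕ) (μ1 : Measure (Fin m1 → ℂ))
    (μ2 : Measure (Fin m2 → ℂ)) [IsFiniteMeasure μ1] [IsFiniteMeasure μ2]
    (M : EuclideanSpace ℂ (Fin m1 × Fin m2)) (δ : ℝ) :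
    ((Measure.pi fun _ : Fin n => μ1).prod (Measure.pi fun _ : Fin n => μ2))
        {ab | ∀ j, ‖rankOneMeas (ab.1 j) (ab.2 j) M‖ ≤ δ}
      = (μ1.prod μ2 {x | ‖rankOneMeas x.1 x.2 M‖ ≤ δ}) ^ n := by
  have hmp := measurePreserving_arrowProdEquivProdArrow (Fin m1 → ℂ) (Fin m2 → ℂ) (Fin n)
    (fun _ => μ1) (fun _ => μ2)
  rw [← hmp.measure_preimage_equiv]
  have : (MeasurableEquiv.arrowProdEquivProdArrow (Fin m1 → ℂ) (Fin m2 → ℂ) (Fin n)) ⁻¹'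
      {ab | ∀ j, ‖rankOneMeas (ab.1 j) (ab.2 j) M‖ ≤ δ} =
      Set.univ.pi fun _ => {x | ‖rankOneMeas x.1 x.2 M‖ ≤ δ} := by
    ext x
    simp [MeasurableEquiv.arrowProdEquivProdArrow, Equiv.arrowProdEquivProdArrow]
  rw [this, Measure.pi_pi]
  simp

/-! ### Covering numbers of bounded sets -/

/-- Balls are covered by `K ^ m` balls of radius `2 ^ m` times smaller, by iterating a finite cover of
the unit ball by balls of radius `1 / 2`. -/
theorem exists_finset_cover_pow {E : Type*} [NormedAddCommGroup E] [NormedSpace ℝ E]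
    [ProperSpace E] :
    ∃ K : ℕ, 1 ≤ K ∧ ∀ (R : ℝ), 0 < R → ∀ m : ℕ, ∃ C : Finset E, C.card ≤ K ^ m ∧
      Metric.closedBall (0 : E) R ⊆ ⋃ c ∈ C, Metric.closedBall c (R / 2 ^ m) := by
  classical
  obtain ⟨T, -, hT, hcov⟩ := (isCompact_closedBall (0 : E) 1).finite_cover_balls
    (e := 1 / 2) (by norm_num)
  lift T to Finset E using hT
  refine ⟨T.card + 1, by omega, fun R hR m => ?_⟩
  induction m with
  | zero => exact ⟨{0}, by simp, by simp⟩
  | succ m ih =>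
    obtain ⟨C, hcard, hC⟩ := ih
    refine ⟨(C ×ˢ T).image fun x => x.1 + (R / 2 ^ m) • x.2, ?_, ?_⟩
    · refine Finset.card_image_le.trans ?_
      rw [Finset.card_product, pow_succ]
      gcongr
      omega
    · intro x hx
      obtain ⟨c, hc, hxc⟩ := Set.mem_iUnion₂.1 (hC hx)
      have hr : 0 < R / 2 ^ m := by positivity
      have hy : (R / 2 ^ m)⁻¹ • (x - c) ∈ Metric.closedBall (0 : E) 1 := by
        rw [mem_closedBall_zero_iff, norm_smul, norm_inv, Real.norm_of_nonneg hr.le,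
          inv_mul_le_iff₀ hr, mul_one, ← dist_eq_norm]
        exact hxc
      obtain ⟨t, ht, hyt⟩ := Set.mem_iUnion₂.1 (hcov hy)
      refine Set.mem_iUnion₂.2 ⟨c + (R / 2 ^ m) • t,
        Finset.mem_image.2 ⟨(c, t), Finset.mem_product.2 ⟨hc, by simpa using ht⟩, rfl⟩, ?_⟩
      rw [Metric.mem_closedBall, dist_eq_norm]
      have : x - (c + (R / 2 ^ m) • t) = (R / 2 ^ m) • ((R / 2 ^ m)⁻¹ • (x - c) - t) := by
        rw [smul_sub, smul_inv_smul₀ hr.ne']; abel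
      rw [this, norm_smul, Real.norm_of_nonneg hr.le, pow_succ]
      rw [Metric.mem_ball, dist_eq_norm] at hyt
      calc _ ≤ R / 2 ^ m * (1 / 2) := by gcongr
        _ = _ := by field_simp

theorem exists_finset_card_eq_coveringNumber {E : Type*} [PseudoMetricSpace E]
    [ProperSpace E] {Ω : Set E} (hbd : Bornology.IsBounded Ω) {ρ : ℝ} (hρ : 0 < ρ) :
    ∃ C : Finset E, C.card = coveringNumber Ω ρ ∧ Ω ⊆ ⋃ c ∈ C, Metric.closedBall c ρ := by
  refine Nat.sInf_mem (s := {k : ℕ | ∃ C : Finset E, C.card = k ∧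
    Ω ⊆ ⋃ c ∈ C, Metric.closedBall c ρ}) ?_
  obtain ⟨T, -, hT, hcov⟩ := hbd.isCompact_closure.finite_cover_balls hρ
  lift T to Finset E using hT
  refine ⟨_, T, rfl, subset_closure.trans (hcov.trans ?_)⟩
  exact Set.iUnion₂_mono fun c _ => Metric.ball_subset_closedBall

/-- The real `limsup` in `upperMinkowskiDim` is a genuine one: the quotients are bounded above. -/
theorem isBoundedUnder_log_coveringNumber {E : Type*} [NormedAddCommGroup E] [NormedSpace ℝ E]
    [ProperSpace E] {Ω : Set E} (hbd : Bornology.IsBounded Ω) :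
    (nhdsWithin (0 : ℝ) (Set.Ioi 0)).IsBoundedUnder (· ≤ ·)
      fun ρ : ℝ => Real.log (coveringNumber Ω ρ) / Real.log (1 / ρ) := by
  obtain ⟨K, hK, hcov⟩ := exists_finset_cover_pow (E := E)
  obtain ⟨R, hR0, hR⟩ := hbd.subset_closedBall_lt 1 (0 : E)
  have hl2 : 0 < Real.log 2 := Real.log_pos (by norm_num)
  have hlK : 0 ≤ Real.log K := Real.log_nonneg (by exact_mod_cast hK)
  refine ⟨Real.log K * (Real.logb 2 R / Real.log 2 + 2 / Real.log 2), ?_⟩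
  rw [eventually_map]
  filter_upwards [Ioo_mem_nhdsGT (show (0 : ℝ) < 1 / 2 by norm_num)] with ρ hρ
  obtain ⟨hρ0, hρ1⟩ := hρ
  have hL : Real.log 2 ≤ Real.log (1 / ρ) := by
    apply Real.log_le_log (by norm_num)
    rw [le_div_iff₀ hρ0]; linarith
  have hx : 0 ≤ Real.logb 2 (R / ρ) := by
    apply Real.logb_nonneg (by norm_num)
    rw [le_div_iff₀ hρ0]; linarith
  set m := ⌈Real.logb 2 (R / ρ)⌉₊ with hm
  have hmle : Real.logb 2 (R / ρ) ≤ m := Nat.le_ceil _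
  have hmlt : (m : ℝ) < Real.logb 2 (R / ρ) + 1 := Nat.ceil_lt_add_one hx
  have hrad : R / 2 ^ m ≤ ρ := by
    have : R / ρ ≤ 2 ^ (m : ℝ) := (Real.logb_le_iff_le_rpow (by norm_num) (by positivity)).1 hmle
    rw [Real.rpow_natCast] at this
    rw [div_le_iff₀ hρ0] at this
    rw [div_le_iff₀ (by positivity)]
    linarith
  obtain ⟨C, hcard, hC⟩ := hcov R (by linarith) m
  have hN : coveringNumber Ω ρ ≤ K ^ m := by
    refine le_trans (Nat.sInf_le ⟨C, rfl, ?_⟩) hcard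
    exact hR.trans (hC.trans (Set.iUnion₂_mono fun c _ => Metric.closedBall_subset_closedBall hrad))
  have hlogN : Real.log (coveringNumber Ω ρ) ≤ m * Real.log K := by
    rcases Nat.eq_zero_or_pos (coveringNumber Ω ρ) with h0 | h0
    · rw [h0]; simp; positivity
    · rw [← Real.log_pow]
      apply Real.log_le_log (by exact_mod_cast h0)
      exact_mod_cast hN
  rw [div_le_iff₀ (by linarith)]
  have hsplit : Real.logb 2 (R / ρ) = Real.logb 2 R + Real.log (1 / ρ) / Real.log 2 := by
    rw [div_eq_mul_one_div R ρ, Real.logb_mul (by positivity) (by positivity)]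
    rfl
  have hbR : 0 ≤ Real.logb 2 R := Real.logb_nonneg (by norm_num) hR0.le
  have h1 : 1 ≤ Real.log (1 / ρ) / Real.log 2 := (one_le_div hl2).2 hL
  calc _ ≤ m * Real.log K := hlogN
    _ ≤ (Real.logb 2 R * (Real.log (1 / ρ) / Real.log 2) +
          2 * (Real.log (1 / ρ) / Real.log 2)) * Real.log K := by
        gcongr
        nlinarith
    _ = _ := by ring

theorem eventually_coveringNumber_le {E : Type*} [NormedAddCommGroup E] [NormedSpace ℝ E]
    [ProperSpace E] {Ω : Set E} (hbd : Bornology.IsBounded Ω) {d : ℝ}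
    (hd : upperMinkowskiDim Ω < d) :
    ∀ᶠ ρ : ℝ in nhdsWithin 0 (Set.Ioi 0), (coveringNumber Ω ρ : ℝ) ≤ ρ ^ (-d) := by
  filter_upwards [eventually_lt_of_limsup_lt hd (isBoundedUnder_log_coveringNumber hbd),
    Ioo_mem_nhdsGT (show (0 : ℝ) < 1 by norm_num)] with ρ h hρ
  obtain ⟨hρ0, hρ1⟩ := hρ
  have hL : 0 < Real.log (1 / ρ) := Real.log_pos (by rw [lt_div_iff₀ hρ0]; linarith)
  rw [div_lt_iff₀ hL] at h
  rcases Nat.eq_zero_or_pos (coveringNumber Ω ρ) with h0 | h0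
  · rw [h0]; simp; positivity
  · rw [← Real.log_le_log_iff (by exact_mod_cast h0) (by positivity), Real.log_rpow hρ0]
    rw [one_div, Real.log_inv] at h
    linarith

/-! ### The union bound over a cover -/

theorem rankOneMeas_sub {m1 m2 : ℕ} (a : Fin m1 → ℂ) (b : Fin m2 → ℂ)
    (M N : EuclideanSpace ℂ (Fin m1 × Fin m2)) :
    rankOneMeas a b (M - N) = rankOneMeas a b M - rankOneMeas a b N := by
  simp [rankOneMeas, mul_sub, sub_mul, Finset.sum_sub_distrib]

theorem norm_rankOneMeas_le {m1 m2 : ℕ} {R : ℝ} (hR : 0 ≤ R) {a : Fin m1 → ℂ} {b : Fin m2 → ℂ}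
    (ha : ∀ i, ‖a i‖ ≤ R) (hb : ∀ j, ‖b j‖ ≤ R)
    (M : EuclideanSpace ℂ (Fin m1 × Fin m2)) :
    ‖rankOneMeas a b M‖ ≤ m1 * m2 * R ^ 2 * ‖M‖ := by
  have h : ∀ i j, ‖(starRingEnd ℂ) (a i) * M (i, j) * (starRingEnd ℂ) (b j)‖ ≤ R ^ 2 * ‖M‖ := by
    intro i j
    rw [norm_mul, norm_mul, RCLike.norm_conj, RCLike.norm_conj]
    have h1 : ‖M (i, j)‖ ≤ ‖M‖ := PiLp.norm_apply_le M (i, j)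
    calc _ ≤ R * ‖M‖ * R := by gcongr <;> solve_by_elim
      _ = _ := by ring
  calc _ ≤ ∑ i : Fin m1, ∑ j : Fin m2, R ^ 2 * ‖M‖ :=
        (norm_sum_le _ _).trans (Finset.sum_le_sum fun i _ =>
          (norm_sum_le _ _).trans (Finset.sum_le_sum fun j _ => h i j))
    _ = _ := by simp; ring

/-- The tuples all of whose entries lie in the disc of radius `R`. -/
def measBox (m1 m2 n : ℕ) (R : ℝ) : Set ((Fin n → Fin m1 → ℂ) × (Fin n → Fin m2 → ℂ)) :=
  (Set.univ.pi fun _ => Set.univ.pi fun _ => Metric.ball (0 : ℂ) R) ×ˢ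
    (Set.univ.pi fun _ => Set.univ.pi fun _ => Metric.ball (0 : ℂ) R)

theorem measurableSet_measBox (m1 m2 n : ℕ) (R : ℝ) : MeasurableSet (measBox m1 m2 n R) :=
  (MeasurableSet.univ_pi fun _ => MeasurableSet.univ_pi fun _ => measurableSet_ball).prod
    (MeasurableSet.univ_pi fun _ => MeasurableSet.univ_pi fun _ => measurableSet_ball)

/-- Lebesgue measure on the box is a product of Lebesgue measures on discs. -/
theorem restrict_measBox (m1 m2 n : ℕ) (R : ℝ) :
    (volume : Measure ((Fin n → Fin m1 → ℂ) × (Fin n → Fin m2 → ℂ))).restrict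
      (measBox m1 m2 n R) =
    (Measure.pi fun _ : Fin n => Measure.pi fun _ : Fin m1 =>
      (volume : Measure ℂ).restrict (Metric.ball 0 R)).prod
    (Measure.pi fun _ : Fin n => Measure.pi fun _ : Fin m2 =>
      (volume : Measure ℂ).restrict (Metric.ball 0 R)) := by
  rw [measBox, Measure.volume_eq_prod, ← Measure.prod_restrict]
  simp only [volume_pi, Measure.restrict_pi_pi]

set_option maxHeartbeats 1000000 in
/-- The covering argument: the tuples in a bounded box that fail to separate some pair of points of
`Ω` whose `(i, j)` entries differ by at least `η` form a null set. Covering `Ω` at scale `ρ` bounds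
its measure by `O(ρ ^ (-2 d) * ρ ^ (p n))`, and `p n > 2 d`. -/
theorem volume_restrict_bad_eq_zero {m1 m2 n : ℕ} (hn : 0 < n)
    {Ω : Set (EuclideanSpace ℂ (Fin m1 × Fin m2))}
    (hbd : Bornology.IsBounded Ω) (hdim : upperMinkowskiDim Ω < n)
    (i : Fin m1) (j : Fin m2) {η R : ℝ} (hη : 0 < η) (hR : 0 ≤ R) :
    volume.restrict (measBox m1 m2 n R) {ab | ∃ M1 ∈ Ω, ∃ M2 ∈ Ω, η ≤ ‖M1 (i, j) - M2 (i, j)‖ ∧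
      ∀ l, rankOneMeas (ab.1 l) (ab.2 l) M1 = rankOneMeas (ab.1 l) (ab.2 l) M2} = 0 := by
  classical
  have hn' : (0 : ℝ) < n := by exact_mod_cast hn
  obtain ⟨d, hd, hdn⟩ := exists_between (max_lt hdim hn')
  obtain ⟨hd1, hd0⟩ := max_lt_iff.1 hd
  -- any exponent with `2 d / n < p < 2` works; this is the midpoint
  set p : ℝ := (d + n) / n with hp_def
  have hp : 0 < p := by positivity
  have hp2 : p < 2 := by rw [hp_def, div_lt_iff₀ hn']; linarith
  have hpn : p * n = d + n := by rw [hp_def]; field_simp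
  obtain ⟨C, -, hCt, hC⟩ := exists_lintegral_affine_le hp hp2 R
  set ν := (volume : Measure ℂ).restrict (Metric.ball 0 R) with hν
  have hνfin : IsFiniteMeasure ν :=
    ⟨by rw [hν, Measure.restrict_apply_univ]; exact measure_ball_lt_top⟩
  set D : ENNReal := (C * (ν Set.univ) ^ (m1 - 1)) *
        ((C * (ν Set.univ) ^ (m2 - 1)) * ENNReal.ofReal (η / 2) ^ (-p)) with hD
  have hDt : D ≠ ⊤ := by
    have h1 : ν Set.univ ≠ ⊤ := measure_ne_top _ _
    have h2 : ENNReal.ofReal (η / 2) ^ (-p) ≠ ⊤ := by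
      rw [ENNReal.ofReal_rpow_of_pos (by positivity)]; exact ENNReal.ofReal_ne_top
    finiteness
  set K : ℝ := 2 * (m1 * m2 * R ^ 2) + 1 with hK
  have hK0 : 0 < K := by positivity
  set P := volume.restrict (measBox m1 m2 n R) with hP
  set Bad : Set ((Fin n → Fin m1 → ℂ) × (Fin n → Fin m2 → ℂ)) :=
    {ab | ∃ M1 ∈ Ω, ∃ M2 ∈ Ω, η ≤ ‖M1 (i, j) - M2 (i, j)‖ ∧
      ∀ l, rankOneMeas (ab.1 l) (ab.2 l) M1 = rankOneMeas (ab.1 l) (ab.2 l) M2} with hBad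
  have hsingle : ∀ (M : EuclideanSpace ℂ (Fin m1 × Fin m2)) (δ : ℝ), 0 < δ →
      η / 2 ≤ ‖M (i, j)‖ →
      P {ab | ∀ l, ‖rankOneMeas (ab.1 l) (ab.2 l) M‖ ≤ δ} ≤ (ENNReal.ofReal δ ^ p * D) ^ n := by
    intro M δ hδ hM
    rw [hP, restrict_measBox, measure_forall_rankOneMeas_le]
    gcongr
    refine (measure_rankOneMeas_le hp hC M i j hδ).trans ?_
    have : ‖M (i, j)‖ₑ ^ (-p) ≤ ENNReal.ofReal (η / 2) ^ (-p) := by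
      rw [ENNReal.rpow_neg, ENNReal.rpow_neg, ← ofReal_norm]
      gcongr
    rw [hD]
    gcongr
  have hbound : ∀ᶠ ρ : ℝ in nhdsWithin 0 (Set.Ioi 0),
      P Bad ≤ ENNReal.ofReal ((K ^ p * D.toReal) ^ n * ρ ^ (n - d)) := by
    filter_upwards [eventually_coveringNumber_le hbd hd1,
      Ioo_mem_nhdsGT (show (0 : ℝ) < η / 4 by positivity)] with ρ hN hρ
    obtain ⟨hρ0, hρη⟩ := hρ
    obtain ⟨T, hTcard, hT⟩ := exists_finset_card_eq_coveringNumber hbd hρ0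
    -- only pairs of centers with separated `(i, j)` entries can arise from separated matrices
    set S := (T ×ˢ T).filter fun c => η / 2 ≤ ‖(c.1 - c.2) (i, j)‖ with hS
    have hcover : Bad ≤ᵐ[P]
        (⋃ c ∈ S, {ab | ∀ l, ‖rankOneMeas (ab.1 l) (ab.2 l) (c.1 - c.2)‖ ≤ K * ρ} : Set _) := by
      filter_upwards [ae_restrict_mem (measurableSet_measBox m1 m2 n R)] with ab hab hmem
      obtain ⟨M1, hM1, M2, hM2, hsep, heq⟩ := hmem
      obtain ⟨c1, hc1, h1⟩ := Set.mem_iUnion₂.1 (hT hM1)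
      obtain ⟨c2, hc2, h2⟩ := Set.mem_iUnion₂.1 (hT hM2)
      rw [Metric.mem_closedBall, dist_eq_norm] at h1 h2
      refine Set.mem_iUnion₂.2 ⟨(c1, c2), ?_, ?_⟩
      · refine Finset.mem_filter.2 ⟨Finset.mem_product.2 ⟨hc1, hc2⟩, ?_⟩
        have e1 : ‖M1 (i, j) - c1 (i, j)‖ ≤ ρ := (PiLp.norm_apply_le (M1 - c1) (i, j)).trans h1
        have e2 : ‖M2 (i, j) - c2 (i, j)‖ ≤ ρ := (PiLp.norm_apply_le (M2 - c2) (i, j)).trans h2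
        have e3 : M1 (i, j) - M2 (i, j) = (M1 (i, j) - c1 (i, j)) - (M2 (i, j) - c2 (i, j))
          + (c1 (i, j) - c2 (i, j)) := by ring
        have e4 := norm_add_le ((M1 (i, j) - c1 (i, j)) - (M2 (i, j) - c2 (i, j)))
          (c1 (i, j) - c2 (i, j))
        have e5 := norm_sub_le (M1 (i, j) - c1 (i, j)) (M2 (i, j) - c2 (i, j))
        rw [← e3] at e4
        show η / 2 ≤ ‖c1 (i, j) - c2 (i, j)‖
        linarith
      · intro l
        have ha : ∀ k, ‖ab.1 l k‖ ≤ R := fun k => by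
          simpa using (mem_ball_zero_iff.1 (hab.1 l trivial k trivial)).le
        have hb : ∀ k, ‖ab.2 l k‖ ≤ R := fun k => by
          simpa using (mem_ball_zero_iff.1 (hab.2 l trivial k trivial)).le
        have e1 := norm_rankOneMeas_le hR ha hb (M1 - c1)
        have e2 := norm_rankOneMeas_le hR ha hb (M2 - c2)
        have e3 : rankOneMeas (ab.1 l) (ab.2 l) (c1 - c2) =
            rankOneMeas (ab.1 l) (ab.2 l) (M2 - c2) - rankOneMeas (ab.1 l) (ab.2 l) (M1 - c1) := by
          simp only [rankOneMeas_sub, heq l]; ring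
        show ‖rankOneMeas (ab.1 l) (ab.2 l) (c1 - c2)‖ ≤ K * ρ
        rw [e3]
        have h3 : (m1 * m2 * R ^ 2 : ℝ) * ‖M1 - c1‖ ≤ m1 * m2 * R ^ 2 * ρ := by gcongr
        have h4 : (m1 * m2 * R ^ 2 : ℝ) * ‖M2 - c2‖ ≤ m1 * m2 * R ^ 2 * ρ := by gcongr
        refine (norm_sub_le _ _).trans ?_
        rw [hK]
        linarith
    have hScard : (S.card : ℝ) ≤ ρ ^ (-d) * ρ ^ (-d) := by
      have : S.card ≤ T.card * T.card := (Finset.card_filter_le _ _).trans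
        (Finset.card_product _ _).le
      calc (S.card : ℝ) ≤ T.card * T.card := by exact_mod_cast this
        _ ≤ _ := by rw [hTcard]; gcongr
    calc P Bad ≤ ∑ c ∈ S, P {ab | ∀ l, ‖rankOneMeas (ab.1 l) (ab.2 l) (c.1 - c.2)‖ ≤ K * ρ} :=
          (measure_mono_ae hcover).trans (measure_biUnion_finset_le _ _)
      _ ≤ ∑ _c ∈ S, (ENNReal.ofReal (K * ρ) ^ p * D) ^ n :=
          Finset.sum_le_sum fun c hc =>
            hsingle _ _ (by positivity) (Finset.mem_filter.1 hc).2
      _ = ENNReal.ofReal (S.card * ((K * ρ) ^ p * D.toReal) ^ n) := by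
          rw [Finset.sum_const, nsmul_eq_mul, ENNReal.ofReal_rpow_of_pos (by positivity),
            ENNReal.ofReal_mul (p := (S.card : ℝ)) (by positivity),
            ENNReal.ofReal_natCast, ENNReal.ofReal_pow (by positivity),
            ENNReal.ofReal_mul (p := (K * ρ) ^ p) (by positivity), ENNReal.ofReal_toReal hDt]
      _ ≤ ENNReal.ofReal (ρ ^ (-d) * ρ ^ (-d) * ((K * ρ) ^ p * D.toReal) ^ n) := by
          gcongr
      _ = _ := by
          congr 1
          have h1 : (ρ ^ p) ^ n = ρ ^ (d + n) := by
            rw [← Real.rpow_natCast, ← Real.rpow_mul hρ0.le, hpn]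
          have h2 : ρ ^ ((n : ℝ) - d) = ρ ^ (-d) * ρ ^ (-d) * ρ ^ (d + n) := by
            rw [← Real.rpow_add hρ0, ← Real.rpow_add hρ0]; congr 1; ring
          rw [Real.mul_rpow hK0.le hρ0.le, h2, ← h1]
          ring
  have hlim : Tendsto (fun ρ : ℝ => ENNReal.ofReal ((K ^ p * D.toReal) ^ n * ρ ^ (n - d)))
      (nhdsWithin 0 (Set.Ioi 0)) (nhds 0) := by
    have h1 : Tendsto (fun ρ : ℝ => ρ ^ ((n : ℝ) - d)) (nhdsWithin 0 (Set.Ioi 0)) (nhds 0) := by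
      have := (Real.continuousAt_rpow_const 0 ((n : ℝ) - d) (Or.inr (by linarith))).tendsto
      rw [Real.zero_rpow (by linarith)] at this
      exact this.mono_left nhdsWithin_le_nhds
    simpa using ENNReal.tendsto_ofReal (h1.const_mul ((K ^ p * D.toReal) ^ n))
  exact le_antisymm (ge_of_tendsto hlim hbound) bot_le

/-- Strong identifiability of bounded-set matrix recovery from rank-one measurements:
if `n` exceeds the upper Minkowski dimension of a nonempty bounded `Ω ⊆ ℂ^{m1×m2}`, then
for Lebesgue-almost all tuples `(a_j, b_j)`, any two matrices in `Ω` with the same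
measurements coincide. -/
theorem strong_identifiability_matrix_recovery (m1 m2 n : ℕ) (hn : 0 < n)
    (Ω : Set (EuclideanSpace ℂ (Fin m1 × Fin m2))) (hne : Ω.Nonempty)
    (hbd : Bornology.IsBounded Ω)
    (hdim : upperMinkowskiDim Ω < n) :
    ∀ᵐ ab : (Fin n → Fin m1 → ℂ) × (Fin n → Fin m2 → ℂ),
      ∀ M1 ∈ Ω, ∀ M2 ∈ Ω, (∀ j : Fin n, rankOneMeas (ab.1 j) (ab.2 j) M1 =
          rankOneMeas (ab.1 j) (ab.2 j) M2) → M1 = M2 := by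
  have hbad : ∀ (i : Fin m1) (j : Fin m2) (k R : ℕ),
      ∀ᵐ ab : (Fin n → Fin m1 → ℂ) × (Fin n → Fin m2 → ℂ), ab ∈ measBox m1 m2 n R →
        ¬ ∃ M1 ∈ Ω, ∃ M2 ∈ Ω, 1 / ((k : ℝ) + 1) ≤ ‖M1 (i, j) - M2 (i, j)‖ ∧
          ∀ l, rankOneMeas (ab.1 l) (ab.2 l) M1 = rankOneMeas (ab.1 l) (ab.2 l) M2 := by
    intro i j k R
    rw [← ae_restrict_iff' (measurableSet_measBox m1 m2 n R)]
    have := volume_restrict_bad_eq_zero hn hbd hdim i j (η := 1 / ((k : ℝ) + 1)) (R := R)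
      (by positivity) (by positivity)
    exact measure_eq_zero_iff_ae_notMem.1 this
  simp_rw [← ae_all_iff] at hbad
  filter_upwards [hbad] with ab hab M1 hM1 M2 hM2 heq
  by_contra hne'
  obtain ⟨⟨i, j⟩, hij⟩ : ∃ x, M1 x ≠ M2 x := by
    by_contra! h
    exact hne' (PiLp.ext h)
  obtain ⟨k, hk⟩ := exists_nat_one_div_lt (norm_pos_iff.2 (sub_ne_zero.2 hij))
  obtain ⟨R, hR⟩ := exists_nat_gt ‖ab‖
  refine hab i j k R ⟨fun l _ q _ => ?_, fun l _ q _ => ?_⟩ ⟨M1, hM1, M2, hM2, hk.le, heq⟩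
  · exact mem_ball_zero_iff.2 (((norm_le_pi_norm _ q).trans
      ((norm_le_pi_norm _ l).trans (norm_fst_le ab))).trans_lt hR)
  · exact mem_ball_zero_iff.2 (((norm_le_pi_norm _ q).trans
      ((norm_le_pi_norm _ l).trans (norm_snd_le ab))).trans_lt hR)
end
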